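/- arXiv:2312.15519 — 2 statements merged into one kernel-verified Lean document; each statement's English description precedes it below -/
import Mathlib

section
/- Let D be a sink-free one-way split digraph with K(D) nonempty such that the induced subdigraph D[K(D)] is a tournament (exactly one arc between any two distinct vertices of K(D)). Then D has a quasi-kernel Q with |Q| ≤ |I(D)|·(|K(D)| − 1)/(2·|K(D)|) + 1 (an inequality of real numbers). -/
/-!
A quasi-kernel is built from one clique vertex `q` together with the independent vertices `s`
satisfying `N⁺(s) ⊆ N⁺(q)`; these are exactly the independent vertices at distance more than
two from `q`, since the clique part is a tournament.

Fix an outneighbour `f s ∈ K` of each `s ∉ K`, and give `k ∈ K` the weight `w k = #f⁻¹(k)`. The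
number of independent vertices needed is at most `w(N⁺(q))`. Averaging `w(N⁺(q))` over `q` with
the weights `w` themselves counts every pair of distinct clique vertices once, so it gives
`∑ q, w q * w(N⁺(q)) = (W² - ∑ w²) / 2 ≤ W² (n - 1) / (2 n)` by Cauchy-Schwarz, and some `q`
satisfies the bound (`exists_light_outneighborhood`). If a clique vertex `v` does not reach `q`
within two steps, then `N⁺(v) ⊊ N⁺(q)`, so `v` satisfies the bound as well with a smaller
outdegree; hence a `q` of least outdegree among those satisfying the bound is reached by all of
`K` within two steps.
-/

def Indep {V : Type*} (A : V → V → Prop) (Q : Finset V) : Prop :=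
  ∀ u ∈ Q, ∀ v ∈ Q, u ≠ v → ¬ A u v

def QuasiKernel {V : Type*} (A : V → V → Prop) (Q : Finset V) : Prop :=
  Indep A Q ∧
    ∀ v : V, v ∈ Q ∨ (∃ q ∈ Q, A v q) ∨ (∃ w : V, ∃ q ∈ Q, A v w ∧ A w q)

def IsSplit {V : Type*} (A : V → V → Prop) (K : Finset V) : Prop :=
  (∀ u ∈ K, ∀ v ∈ K, u ≠ v → A u v ∨ A v u) ∧
    (∀ u, u ∉ K → ∀ v, v ∉ K → u ≠ v → ¬ A u v)

def IsOneWaySplit {V : Type*} (A : V → V → Prop) (K : Finset V) : Prop :=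
  IsSplit A K ∧ ∀ s, s ∉ K → ∀ w : V, ¬ A w s

open Classical in
/-- In a tournament with nonnegative vertex weights of total `W`, some vertex has an
outneighbourhood of weight at most `W (n - 1) / (2 n)`. -/
theorem exists_light_outneighborhood {V : Type*} (A : V → V → Prop)
    (hirr : ∀ v, ¬ A v v) (K : Finset V) (hK : K.Nonempty)
    (htour : ∀ u ∈ K, ∀ v ∈ K, u ≠ v → (A u v ∨ A v u) ∧ ¬ (A u v ∧ A v u))
    (w : V → ℝ) (hw : ∀ v, 0 ≤ w v) :
    ∃ q ∈ K, (∑ v ∈ K, if A q v then w v else 0) ≤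
      (∑ v ∈ K, w v) * ((K.card : ℝ) - 1) / (2 * (K.card : ℝ)) := by
  have hn : (0 : ℝ) < K.card := by exact_mod_cast hK.card_pos
  set W := ∑ v ∈ K, w v with hW
  set g : V → ℝ := fun q => ∑ v ∈ K, if A q v then w v else 0 with hg
  set B := W * ((K.card : ℝ) - 1) / (2 * (K.card : ℝ)) with hB
  have hpairs : ∑ u ∈ K, w u * g u + ∑ u ∈ K, w u * g u + ∑ u ∈ K, w u ^ 2 = W ^ 2 := by
    have e1 : ∑ u ∈ K, w u * g u = ∑ u ∈ K, ∑ v ∈ K, if A u v then w u * w v else 0 := by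
      refine Finset.sum_congr rfl fun u _ => ?_
      simp only [hg, Finset.mul_sum, mul_ite, mul_zero]
    have e2 : ∑ u ∈ K, w u * g u = ∑ u ∈ K, ∑ v ∈ K, if A v u then w u * w v else 0 := by
      rw [e1, Finset.sum_comm]
      simp only [mul_comm]
    have e3 : ∑ u ∈ K, w u ^ 2 = ∑ u ∈ K, ∑ v ∈ K, if u = v then w u * w v else 0 := by
      refine Finset.sum_congr rfl fun u hu => ?_
      rw [Finset.sum_ite_eq, if_pos hu, sq]
    have e4 : W ^ 2 = ∑ u ∈ K, ∑ v ∈ K, w u * w v := by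
      rw [sq, hW, Finset.sum_mul_sum]
    rw [e3, e4]
    nth_rewrite 1 [e1]
    rw [e2]
    simp only [← Finset.sum_add_distrib]
    refine Finset.sum_congr rfl fun u hu => Finset.sum_congr rfl fun v hv => ?_
    by_cases huv : u = v
    · subst huv
      simp [hirr]
    · obtain ⟨h1, h2⟩ := htour u hu v hv huv
      by_cases ha : A u v
      · have hb : ¬ A v u := fun hb => h2 ⟨ha, hb⟩
        simp [ha, hb, huv]
      · have hb : A v u := h1.resolve_left ha
        simp [ha, hb, huv]
  have hcs : W ^ 2 ≤ K.card * ∑ u ∈ K, w u ^ 2 := sq_sum_le_card_mul_sum_sq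
  have havg : ∑ u ∈ K, w u * g u ≤ W * B := by
    have : W * B = (W ^ 2 * ((K.card : ℝ) - 1)) / (2 * (K.card : ℝ)) := by
      rw [hB]; ring
    rw [this, le_div_iff₀ (by positivity)]
    nlinarith
  by_contra! hcon
  have hle : ∀ u ∈ K, w u * B ≤ w u * g u := fun u hu =>
    mul_le_mul_of_nonneg_left (hcon u hu).le (hw u)
  have hsum : W * B = ∑ u ∈ K, w u * B := by rw [hW, Finset.sum_mul]
  rw [hsum] at havg
  have heq := (Finset.sum_eq_sum_iff_of_le hle).1 (le_antisymm (Finset.sum_le_sum hle) havg)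
  have hzero : ∀ u ∈ K, w u = 0 := fun u hu => by
    by_contra h
    exact (hcon u hu).ne (mul_left_cancel₀ h (heq u hu))
  -- All weights vanish, so both sides of the bound are zero.
  obtain ⟨q, hq⟩ := hK
  have hWz : W = 0 := Finset.sum_eq_zero hzero
  have hgz : g q = 0 := Finset.sum_eq_zero fun v hv => by simp [hzero v hv]
  have : B < g q := hcon q hq
  rw [hgz, hB, hWz] at this
  simp at this

/-- A sink-free one-way split digraph whose clique part induces a tournament has a quasi-kernel
of size at most `|I|·(|K| − 1)/(2|K|) + 1`. -/
theorem stmt18 {V : Type*} [Fintype V] [DecidableEq V] (A : V → V → Prop)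
    (hirr : Irreflexive A) (K : Finset V) (hK : K.Nonempty)
    (hows : IsOneWaySplit A K)
    (htour : ∀ u ∈ K, ∀ v ∈ K, u ≠ v → (A u v ∨ A v u) ∧ ¬ (A u v ∧ A v u))
    (hsinkfree : ∀ v : V, ∃ w : V, A v w) :
    ∃ Q : Finset V, QuasiKernel A Q ∧
      (Q.card : ℝ) ≤ (Kᶜ.card : ℝ) * ((K.card : ℝ) - 1) / (2 * (K.card : ℝ)) + 1 := by
  classical
  have hirr' : ∀ v, ¬ A v v := hirr
  choose f hf using hsinkfree
  have hfK : ∀ s, f s ∈ K := fun s => by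
    by_contra h
    exact hows.2 _ h s (hf s)
  set w : V → ℝ := fun k => ∑ s ∈ Kᶜ, if f s = k then 1 else 0 with hw
  have hw0 : ∀ v, 0 ≤ w v := fun v => Finset.sum_nonneg fun s _ => by split_ifs <;> norm_num
  have hW : ∑ v ∈ K, w v = (Kᶜ.card : ℝ) := by
    rw [hw, Finset.sum_comm]
    simp [hfK]
  set g : V → ℝ := fun q => ∑ v ∈ K, if A q v then w v else 0 with hg
  set B : ℝ := (Kᶜ.card : ℝ) * ((K.card : ℝ) - 1) / (2 * (K.card : ℝ)) with hB
  obtain ⟨q₀, hq₀, hq₀B⟩ := exists_light_outneighborhood A hirr' K hK htour w hw0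
  rw [hW] at hq₀B
  obtain ⟨q, hq, hmin⟩ := Finset.exists_min_image (K.filter fun q => g q ≤ B)
    (fun q => (K.filter fun v => A q v).card) ⟨q₀, Finset.mem_filter.2 ⟨hq₀, hq₀B⟩⟩
  obtain ⟨hqK, hqB⟩ := Finset.mem_filter.1 hq
  have hking : ∀ v ∈ K, v = q ∨ A v q ∨ ∃ x, A v x ∧ A x q := by
    intro v hv
    by_contra! hcon
    obtain ⟨hne, hvq, hx⟩ := hcon
    have hqv : A q v := ((htour v hv q hqK hne).1).resolve_left hvq
    have hsub : ∀ x ∈ K, A v x → A q x := fun x hxK hvx => by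
      have hxq : x ≠ q := by
        rintro rfl
        exact hvq hvx
      exact ((htour x hxK q hqK hxq).1).resolve_left (hx x hvx)
    have hgv : g v ≤ g q := Finset.sum_le_sum fun x hxK => by
      by_cases h : A v x
      · simp [h, hsub x hxK h]
      · simp only [h, if_false]
        split_ifs
        · exact hw0 x
        · exact le_rfl
    have hlt : (K.filter fun x => A v x).card < (K.filter fun x => A q x).card := by
      refine Finset.card_lt_card ((Finset.ssubset_iff_of_subset ?_).2 ⟨v, ?_, ?_⟩)
      · intro x hx'
        rw [Finset.mem_filter] at hx' ⊢
        exact ⟨hx'.1, hsub x hx'.1 hx'.2⟩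
      · exact Finset.mem_filter.2 ⟨hv, hqv⟩
      · simp [hirr']
    exact absurd (hmin v (Finset.mem_filter.2 ⟨hv, hgv.trans hqB⟩)) (not_le.2 hlt)
  set S : Finset V := Kᶜ.filter fun s => ∀ x, A s x → A q x with hS
  have hScard : (S.card : ℝ) ≤ g q := by
    have e : g q = ∑ s ∈ Kᶜ, if A q (f s) then (1 : ℝ) else 0 := by
      have : ∀ v, (if A q v then w v else 0) =
          ∑ s ∈ Kᶜ, if f s = v then (if A q (f s) then (1 : ℝ) else 0) else 0 := fun v => by
        by_cases h : A q v
        · simp only [h, if_true, hw]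
          refine Finset.sum_congr rfl fun s _ => ?_
          by_cases hs : f s = v
          · simp [hs, h]
          · simp [hs]
        · simp only [h, if_false]
          refine (Finset.sum_eq_zero fun s _ => ?_).symm
          by_cases hs : f s = v
          · simp [hs, h]
          · simp [hs]
      simp only [hg, this]
      rw [Finset.sum_comm]
      refine Finset.sum_congr rfl fun s _ => ?_
      rw [Finset.sum_ite_eq, if_pos (hfK s)]
    rw [e, Finset.sum_boole]
    refine Nat.cast_le.2 (Finset.card_le_card fun s hs => ?_)
    rw [hS, Finset.mem_filter] at hs
    exact Finset.mem_filter.2 ⟨hs.1, hs.2 _ (hf s)⟩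
  have hSK : ∀ s ∈ S, s ∉ K := fun s hs => Finset.mem_compl.1 (Finset.mem_filter.1 hs).1
  have hSq : ∀ s ∈ S, ¬ A s q := fun s hs h => hirr' q ((Finset.mem_filter.1 hs).2 q h)
  refine ⟨insert q S, ⟨?_, ?_⟩, ?_⟩
  · intro u hu v hv huv h
    rcases Finset.mem_insert.1 hv with rfl | hvS
    · rcases Finset.mem_insert.1 hu with rfl | huS
      · exact huv rfl
      · exact hSq u huS h
    · exact hows.2 v (hSK v hvS) u h
  · intro v
    have hqm : q ∈ insert q S := Finset.mem_insert_self _ _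
    by_cases hv : v ∈ K
    · rcases hking v hv with rfl | h | ⟨x, hx1, hx2⟩
      · exact Or.inl hqm
      · exact Or.inr (Or.inl ⟨q, hqm, h⟩)
      · exact Or.inr (Or.inr ⟨x, q, hqm, hx1, hx2⟩)
    · by_cases hvS : v ∈ S
      · exact Or.inl (Finset.mem_insert_of_mem hvS)
      · have : ∃ x, A v x ∧ ¬ A q x := by
          by_contra! hcon
          exact hvS (Finset.mem_filter.2 ⟨Finset.mem_compl.2 hv, hcon⟩)
        obtain ⟨x, hvx, hqx⟩ := this
        have hxK : x ∈ K := by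
          by_contra h
          exact hows.2 x h v hvx
        by_cases hxq : x = q
        · subst hxq
          exact Or.inr (Or.inl ⟨x, hqm, hvx⟩)
        · exact Or.inr (Or.inr
            ⟨x, q, hqm, hvx, ((htour x hxK q hqK hxq).1).resolve_right hqx⟩)
  · have h1 : ((insert q S).card : ℝ) ≤ S.card + 1 := by
      exact_mod_cast Finset.card_insert_le q S
    linarith
end

section
/- Let D be a biorientation of a complete split graph, let v be a sink of D, and let u be a vertex of D distinct from v that is not a sink. Then there is a directed path of length at most 2 from u to v. -/
def IsCompleteSplit {V : Type*} (A : V → V → Prop) (K : Finset V) : Prop :=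
  IsSplit A K ∧ ∀ s, s ∉ K → ∀ k ∈ K, A s k ∨ A k s

/-- In a biorientation of a complete split graph, if `v` is a sink and `u ≠ v` is not a sink,
then there is a directed path of length at most 2 from `u` to `v`. -/
theorem stmt19 {V : Type*} [Fintype V] [DecidableEq V] (A : V → V → Prop)
    (hirr : Irreflexive A) (K : Finset V) (hcs : IsCompleteSplit A K)
    (v : V) (hv : ∀ w : V, ¬ A v w)
    (u : V) (huv : u ≠ v) (hu : ∃ w : V, A u w) :
    A u v ∨ ∃ w : V, A u w ∧ A w v := by
  obtain ⟨⟨hK, hI⟩, hIK⟩ := hcs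
  -- A sink receives an arc from every vertex of `K` other than itself.
  have key : ∀ k ∈ K, k ≠ v → A k v := by
    intro k hk hkv
    by_cases hvK : v ∈ K
    · exact (hK k hk v hvK hkv).resolve_right (hv k)
    · exact (hIK v hvK k hk).resolve_left (hv k)
  by_cases huK : u ∈ K
  · exact Or.inl (key u huK huv)
  by_cases hvK : v ∈ K
  · exact Or.inl ((hIK u huK v hvK).resolve_right (hv u))
  -- Both endpoints are independent, so any out-neighbor of `u` lies in `K`.
  obtain ⟨w, hw⟩ := hu
  have hwK : w ∈ K := by
    by_contra hwK
    exact hI u huK w hwK (fun h => hirr u (h ▸ hw)) hw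
  exact Or.inr ⟨w, hw, key w hwK (fun h => hvK (h ▸ hwK))⟩
end
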